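/- (Analytic identity underlying the quotient of theta null sums in the proof of Theorem 4.1 of the paper.) Let g ≥ 1, let p be an odd positive integer, let ν ≥ 1 be an integer, let ε ∈ {0,1}^g ⊂ ℤ^g, and let Ω ∈ 𝔥_g. If θ_2[ε,0](0, 2^ν p·Ω) ≠ 0, then ( ∑_{u ∈ {0,…,2^ν−1}^g} (−1)^{ε·u} θ_{2^ν p}[0, p·u](0, (1/(2^ν p))Ω) ) / ( ∑_{u ∈ {0,…,2^ν p−1}^g} (−1)^{ε·u} θ_{2^ν p}[0, u](0, (1/(2^ν p))Ω) ) = p^{−g} · θ_2[ε,0](0, (2^ν/p)Ω) / θ_2[ε,0](0, 2^ν p·Ω). -/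

import Mathlib

open scoped BigOperators

/-- The `n`-th term of the series defining the theta function with rational
characteristics `θ_l[ε₁,ε₂](z,Ω)` (equation (1) of the paper). -/
noncomputable def thetaTerm (g l : ℕ) (ε₁ ε₂ : Fin g → ℤ) (z : Fin g → ℂ)
    (Ω : Matrix (Fin g) (Fin g) ℂ) (n : Fin g → ℤ) : ℂ :=
  Complex.exp (↑Real.pi * Complex.I *
      (∑ i, ∑ j, ((n i : ℂ) + (ε₁ i : ℂ) / (l : ℂ)) * Ω i j *
        ((n j : ℂ) + (ε₁ j : ℂ) / (l : ℂ)))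
    + 2 * ↑Real.pi * Complex.I *
      (∑ i, ((n i : ℂ) + (ε₁ i : ℂ) / (l : ℂ)) * (z i + (ε₂ i : ℂ) / (l : ℂ))))

/-- The theta function with rational characteristics `θ_l[ε₁,ε₂](z,Ω)`. -/
noncomputable def thetaChar (g l : ℕ) (ε₁ ε₂ : Fin g → ℤ) (z : Fin g → ℂ)
    (Ω : Matrix (Fin g) (Fin g) ℂ) : ℂ :=
  ∑' n : Fin g → ℤ, thetaTerm g l ε₁ ε₂ z Ω n

/-- `Ω` belongs to the Siegel upper half space `𝔥_g`: it is symmetric and its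
imaginary part is positive definite. -/
def IsSiegel {g : ℕ} (Ω : Matrix (Fin g) (Fin g) ℂ) : Prop :=
  Ω.IsSymm ∧ (Matrix.of fun i j => (Ω i j).im).PosDef

/-- A positive definite real form dominates a multiple of the sum of squares. -/
lemma posDef_lower_bound (g : ℕ) (hg : 1 ≤ g) (Y : Matrix (Fin g) (Fin g) ℝ) (hY : Y.PosDef) :
    ∃ c : ℝ, 0 < c ∧ ∀ x : Fin g → ℝ, c * ∑ i, x i ^ 2 ≤ ∑ i, ∑ j, x i * Y i j * x j := by
  have hpos : ∀ x : Fin g → ℝ, x ≠ 0 → 0 < ∑ i, ∑ j, x i * Y i j * x j := by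
    intro x hx
    have h := hY.dotProduct_mulVec_pos hx
    simpa [dotProduct, Matrix.mulVec, Finset.mul_sum, mul_assoc] using h
  have : Nonempty (Fin g) := ⟨⟨0, hg⟩⟩
  obtain ⟨x0, hx0, hmin⟩ := (isCompact_sphere (0 : Fin g → ℝ) 1).exists_isMinOn
    (NormedSpace.sphere_nonempty.2 zero_le_one)
    (f := fun x : Fin g → ℝ => ∑ i, ∑ j, x i * Y i j * x j) (by fun_prop)
  have hx0n : x0 ≠ 0 := by
    rintro rfl
    simp at hx0
  set c0 := ∑ i, ∑ j, x0 i * Y i j * x0 j with hc0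
  have hc0p : 0 < c0 := hpos x0 hx0n
  have hgp : (0 : ℝ) < g := by exact_mod_cast hg
  refine ⟨c0 / g, by positivity, fun x => ?_⟩
  by_cases hx : x = 0
  · subst hx; simp
  have hnx : 0 < ‖x‖ := norm_pos_iff.2 hx
  have h1 : c0 ≤ ∑ i, ∑ j, (‖x‖⁻¹ • x) i * Y i j * (‖x‖⁻¹ • x) j := by
    apply hmin
    simp [norm_smul, hnx.ne']
  have h2 : ∑ i, ∑ j, (‖x‖⁻¹ • x) i * Y i j * (‖x‖⁻¹ • x) j
      = (‖x‖⁻¹) ^ 2 * ∑ i, ∑ j, x i * Y i j * x j := by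
    simp only [Finset.mul_sum, Pi.smul_apply, smul_eq_mul]
    refine Finset.sum_congr rfl fun i _ => Finset.sum_congr rfl fun j _ => by ring
  have h3 : c0 * ‖x‖ ^ 2 ≤ ∑ i, ∑ j, x i * Y i j * x j := by
    rw [h2] at h1
    calc c0 * ‖x‖ ^ 2 ≤ ((‖x‖⁻¹) ^ 2 * ∑ i, ∑ j, x i * Y i j * x j) * ‖x‖ ^ 2 := by gcongr
      _ = _ := by field_simp
  have h4 : ∑ i, x i ^ 2 ≤ g * ‖x‖ ^ 2 := by
    calc ∑ i, x i ^ 2 ≤ ∑ _i : Fin g, ‖x‖ ^ 2 := by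
          refine Finset.sum_le_sum fun i _ => ?_
          rw [← sq_abs (x i)]
          gcongr
          exact norm_le_pi_norm x i
      _ = _ := by simp
  calc c0 / g * ∑ i, x i ^ 2 ≤ c0 / g * (g * ‖x‖ ^ 2) := by gcongr
    _ = c0 * ‖x‖ ^ 2 := by field_simp
    _ ≤ _ := h3

lemma summable_gauss_int (c : ℝ) (hc : 0 < c) :
    Summable fun n : ℤ => Real.exp (-Real.pi * c * (n : ℝ) ^ 2) := by
  have h := summable_pow_mul_jacobiTheta₂_term_bound 0 hc 0
  refine h.congr fun n => ?_
  simp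
  ring_nf

lemma summable_prod_pi (f : ℤ → ℝ) (hf : Summable f) (h0 : ∀ n, 0 ≤ f n) (g : ℕ) :
    Summable fun n : Fin g → ℤ => ∏ i, f (n i) := by
  induction g with
  | zero => exact (hasSum_fintype _).summable
  | succ g ih =>
    rw [← (Fin.consEquiv (fun _ : Fin (g + 1) => ℤ)).summable_iff]
    have h := hf.mul_of_nonneg ih h0 (fun n => Finset.prod_nonneg fun i _ => h0 _)
    refine h.congr fun x => ?_
    simp [Fin.prod_univ_succ, Fin.consEquiv]

/-- Convergence of the theta null series. -/
lemma summable_thetaTerm (g : ℕ) (hg : 1 ≤ g) (N : ℕ) (b : Fin g → ℤ)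
    (Ω : Matrix (Fin g) (Fin g) ℂ) (hΩ : IsSiegel Ω) (t : ℝ) (ht : 0 < t) :
    Summable (thetaTerm g N 0 b 0 ((t : ℂ) • Ω)) := by
  obtain ⟨c, hc, hle⟩ := posDef_lower_bound g hg _ hΩ.2
  have hs := summable_prod_pi _ (summable_gauss_int (t * c) (by positivity))
    (fun n => (Real.exp_pos _).le) g
  refine Summable.of_norm_bounded hs fun n => ?_
  rw [thetaTerm, Complex.norm_exp, ← Real.exp_sum]
  apply Real.exp_le_exp.2
  have e1 : (∑ i, ∑ j, ((n i : ℂ) + ((0 : Fin g → ℤ) i : ℂ) / (N : ℂ)) * ((t : ℂ) • Ω) i j *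
        ((n j : ℂ) + ((0 : Fin g → ℤ) j : ℂ) / (N : ℂ))).im
      = t * ∑ i, ∑ j, (n i : ℝ) * (Ω i j).im * (n j : ℝ) := by
    simp only [Complex.im_sum, Finset.mul_sum]
    refine Finset.sum_congr rfl fun i _ => Finset.sum_congr rfl fun j _ => ?_
    simp
    ring
  have e2 : (∑ i, ((n i : ℂ) + ((0 : Fin g → ℤ) i : ℂ) / (N : ℂ)) *
      ((0 : Fin g → ℂ) i + (b i : ℂ) / (N : ℂ))).im = 0 := by
    rw [Complex.im_sum]
    refine Finset.sum_eq_zero fun i _ => ?_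
    have : ((n i : ℂ) + ((0 : Fin g → ℤ) i : ℂ) / (N : ℂ)) *
      ((0 : Fin g → ℂ) i + (b i : ℂ) / (N : ℂ)) = (((n i : ℝ) * ((b i : ℝ) / (N : ℝ)) : ℝ) : ℂ) := by
      push_cast
      simp
    rw [this, Complex.ofReal_im]
  generalize (∑ i, ∑ j, ((n i : ℂ) + ((0 : Fin g → ℤ) i : ℂ) / (N : ℂ)) * ((t : ℂ) • Ω) i j *
        ((n j : ℂ) + ((0 : Fin g → ℤ) j : ℂ) / (N : ℂ))) = A at *
  generalize (∑ i, ((n i : ℂ) + ((0 : Fin g → ℤ) i : ℂ) / (N : ℂ)) *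
      ((0 : Fin g → ℂ) i + (b i : ℂ) / (N : ℂ))) = B at *
  have e3 : ((Real.pi : ℂ) * Complex.I * A + 2 * (Real.pi : ℂ) * Complex.I * B).re
      = -Real.pi * A.im := by
    simp [e2]
  rw [e3, e1, ← Finset.mul_sum]
  have h := hle fun i => (n i : ℝ)
  simp only [Matrix.of_apply] at h
  have hpi := Real.pi_pos
  have : Real.pi * t * (c * ∑ i, (n i : ℝ) ^ 2)
      ≤ Real.pi * t * ∑ i, ∑ j, (n i : ℝ) * (Ω i j).im * (n j : ℝ) := by gcongr
  linarith

/-- Orthogonality of characters in one variable. -/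
lemma char_sum (h : ℕ) (hh : 0 < h) (k : ℤ) :
    ∑ u : Fin (2 * h), Complex.exp (2 * Real.pi * Complex.I * (k : ℂ) / ((2 * h : ℕ) : ℂ)) ^ (u : ℕ)
      = if ((2 * h : ℕ) : ℤ) ∣ k then ((2 * h : ℕ) : ℂ) else 0 := by
  have hM : ((2 * h : ℕ) : ℂ) ≠ 0 := by exact_mod_cast (by omega : 2 * h ≠ 0)
  have hpi : (2 * Real.pi * Complex.I : ℂ) ≠ 0 := Complex.two_pi_I_ne_zero
  generalize 2 * h = M at *
  set w := Complex.exp (2 * Real.pi * Complex.I * (k : ℂ) / (M : ℂ)) with hw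
  have hwM : w ^ M = 1 := by
    rw [hw, ← Complex.exp_nat_mul, Complex.exp_eq_one_iff]
    exact ⟨k, by field_simp⟩
  have hw1 : w = 1 ↔ (M : ℤ) ∣ k := by
    rw [hw, Complex.exp_eq_one_iff]
    constructor
    · rintro ⟨m, hm⟩
      refine ⟨m, ?_⟩
      have : (k : ℂ) = (M : ℂ) * m := by
        have h2 : (2 * Real.pi * Complex.I : ℂ) * k = (2 * Real.pi * Complex.I : ℂ) * (M * m) := by
          rw [div_eq_iff hM] at hm
          rw [hm]; ring
        exact mul_left_cancel₀ hpi h2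
      exact_mod_cast this
    · rintro ⟨m, rfl⟩
      refine ⟨m, ?_⟩
      push_cast
      field_simp
  rw [Fin.sum_univ_eq_sum_range (fun u => w ^ u)]
  split_ifs with hd
  · rw [hw1.2 hd]; simp
  · have hne : w ≠ 1 := fun h => hd (hw1.1 h)
    rw [geom_sum_eq hne, hwM]; simp

lemma neg_one_zpow_eq_exp (a : ℤ) : (-1 : ℂ) ^ a = Complex.exp (Real.pi * Complex.I * a) := by
  rw [← Complex.exp_pi_mul_I, ← Complex.exp_int_mul]
  ring_nf

/-- The weighted sum of theta nulls. -/
lemma theta_sum (g : ℕ) (hg : 1 ≤ g) (h q : ℕ) (hh : 0 < h) (hq : 0 < q) (N M : ℕ)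
    (hM : M = 2 * h) (hN : N = M * q)
    (ε : Fin g → ℤ) (Ω : Matrix (Fin g) (Fin g) ℂ) (hΩ : IsSiegel Ω) (t : ℝ) (ht : 0 < t) :
    ∑ u : Fin g → Fin M, (-1 : ℂ) ^ (∑ i, ε i * ((u i : ℕ) : ℤ)) *
      thetaChar g N 0 (fun i => (q : ℤ) * ((u i : ℕ) : ℤ)) 0 ((t : ℂ) • Ω)
    = (M : ℂ) ^ g * thetaChar g 2 ε 0 0 (((M : ℂ) ^ 2 * t) • Ω) := by
  subst hM
  have hhC : (h : ℂ) ≠ 0 := by exact_mod_cast hh.ne'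
  have hqC : (q : ℂ) ≠ 0 := by exact_mod_cast hq.ne'
  set G : (Fin g → ℤ) → ℂ := fun n => Complex.exp (Real.pi * Complex.I *
    ∑ i, ∑ j, (n i : ℂ) * ((t : ℂ) • Ω) i j * (n j : ℂ)) with hG
  -- each weighted term factors
  have key : ∀ (n : Fin g → ℤ) (u : Fin g → Fin (2 * h)),
      (-1 : ℂ) ^ (∑ i, ε i * ((u i : ℕ) : ℤ)) *
        thetaTerm g N 0 (fun i => (q : ℤ) * ((u i : ℕ) : ℤ)) 0 ((t : ℂ) • Ω) n
      = G n * ∏ i, Complex.exp (2 * Real.pi * Complex.I * ((n i + h * ε i : ℤ) : ℂ)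
          / ((2 * h : ℕ) : ℂ)) ^ (u i : ℕ) := by
    intro n u
    simp only [hG, thetaTerm, neg_one_zpow_eq_exp, ← Complex.exp_nat_mul, ← Complex.exp_sum,
      ← Complex.exp_add]
    congr 1
    simp only [Pi.zero_apply, Int.cast_zero, zero_div, add_zero, zero_add]
    rw [add_left_comm]
    congr 1
    push_cast
    simp only [Finset.mul_sum, ← Finset.sum_add_distrib]
    refine Finset.sum_congr rfl fun i _ => ?_
    rw [hN]
    push_cast
    field_simp
    ring
  have inner : ∀ n : Fin g → ℤ, ∑ u : Fin g → Fin (2 * h),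
      (-1 : ℂ) ^ (∑ i, ε i * ((u i : ℕ) : ℤ)) *
        thetaTerm g N 0 (fun i => (q : ℤ) * ((u i : ℕ) : ℤ)) 0 ((t : ℂ) • Ω) n
      = G n * ∏ i, (if ((2 * h : ℕ) : ℤ) ∣ (n i + h * ε i) then ((2 * h : ℕ) : ℂ) else 0) := by
    intro n
    simp only [key, ← Finset.mul_sum]
    congr 1
    simp only [← char_sum h hh]
    rw [Finset.prod_univ_sum]
    simp
  simp only [thetaChar, ← tsum_mul_left]
  rw [← Summable.tsum_finsetSum
    (fun u _ => (summable_thetaTerm g hg N _ Ω hΩ t ht).mul_left _)]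
  simp only [inner]
  have hinj : Function.Injective
      (fun (m : Fin g → ℤ) (i : Fin g) => ((2 * h : ℕ) : ℤ) * m i + h * ε i) := by
    intro a b hab
    funext i
    have h1 := congrFun hab i
    have h2 : ((2 * h : ℕ) : ℤ) ≠ 0 := by positivity
    exact mul_left_cancel₀ h2 (add_right_cancel h1)
  rw [← hinj.tsum_eq]
  · refine tsum_congr fun m => ?_
    have hd : ∀ i, ((2 * h : ℕ) : ℤ) ∣ (((2 * h : ℕ) : ℤ) * m i + h * ε i + h * ε i) :=
      fun i => ⟨m i + ε i, by push_cast; ring⟩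
    simp only [hd, if_true, Finset.prod_const, Finset.card_univ, Fintype.card_fin]
    rw [mul_comm]
    congr 1
    simp only [hG, thetaTerm]
    congr 1
    simp only [Pi.zero_apply, Int.cast_zero, zero_div, add_zero, mul_zero, Finset.sum_const_zero]
    congr 1
    refine Finset.sum_congr rfl fun i _ => Finset.sum_congr rfl fun j _ => ?_
    simp only [Matrix.smul_apply, smul_eq_mul]
    push_cast
    field_simp
  · intro n hn
    rw [Function.mem_support] at hn
    have hd : ∀ i, ((2 * h : ℕ) : ℤ) ∣ (n i + h * ε i) := by
      intro i
      by_contra hcon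
      apply hn
      rw [Finset.prod_eq_zero (Finset.mem_univ i) (if_neg hcon), mul_zero]
    choose k hk using hd
    refine ⟨fun i => k i - ε i, ?_⟩
    funext i
    have := hk i
    push_cast at this ⊢
    linarith

/-- analytic identity underlying the quotient of theta null sums
in the proof of Theorem 4.1 of the paper. -/
theorem theta_null_quotient (g : ℕ) (hg : 1 ≤ g) (p : ℕ) (hp : Odd p) (hp0 : 0 < p)
    (ν : ℕ) (hν : 1 ≤ ν) (ε : Fin g → ℤ) (hε : ∀ i, ε i = 0 ∨ ε i = 1)
    (Ω : Matrix (Fin g) (Fin g) ℂ) (hΩ : IsSiegel Ω)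
    (hne : thetaChar g 2 ε 0 0 ((((2 ^ ν * p : ℕ) : ℂ)) • Ω) ≠ 0) :
    (∑ u : Fin g → Fin (2 ^ ν),
        (-1 : ℂ) ^ (∑ i, ε i * ((u i : ℕ) : ℤ)) *
          thetaChar g (2 ^ ν * p) 0 (fun i => (p : ℤ) * ((u i : ℕ) : ℤ)) 0
            ((1 / ((2 ^ ν * p : ℕ) : ℂ)) • Ω)) /
      (∑ u : Fin g → Fin (2 ^ ν * p),
        (-1 : ℂ) ^ (∑ i, ε i * ((u i : ℕ) : ℤ)) *
          thetaChar g (2 ^ ν * p) 0 (fun i => ((u i : ℕ) : ℤ)) 0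
            ((1 / ((2 ^ ν * p : ℕ) : ℂ)) • Ω))
    = (p : ℂ) ^ (-(g : ℤ)) *
        thetaChar g 2 ε 0 0 (((2 ^ ν : ℂ) / (p : ℂ)) • Ω) /
          thetaChar g 2 ε 0 0 ((((2 ^ ν * p : ℕ) : ℂ)) • Ω) := by
  have hpC : (p : ℂ) ≠ 0 := by exact_mod_cast hp0.ne'
  obtain ⟨k, rfl⟩ : ∃ k, ν = k + 1 := ⟨ν - 1, by omega⟩
  have hNpos : 0 < 2 ^ (k + 1) * p := by positivity
  have ht : (0 : ℝ) < 1 / ((2 ^ (k + 1) * p : ℕ) : ℝ) := by positivity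
  have hnum := theta_sum g hg (2 ^ k) p (by positivity) hp0 (2 ^ (k + 1) * p) (2 ^ (k + 1))
    (by ring) rfl ε Ω hΩ _ ht
  have hden := theta_sum g hg (2 ^ k * p) 1 (by positivity) one_pos (2 ^ (k + 1) * p)
    (2 ^ (k + 1) * p) (by ring) (by ring) ε Ω hΩ _ ht
  have hN0 : ((2 ^ (k + 1) * p : ℕ) : ℂ) ≠ 0 := by exact_mod_cast hNpos.ne'
  have c1 : (((2 ^ (k + 1) : ℕ) : ℂ) ^ 2 * ((1 / ((2 ^ (k + 1) * p : ℕ) : ℝ) : ℝ) : ℂ))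
      = (2 ^ (k + 1) : ℂ) / (p : ℂ) := by
    push_cast
    field_simp
  have c2 : (((2 ^ (k + 1) * p : ℕ) : ℂ) ^ 2 * ((1 / ((2 ^ (k + 1) * p : ℕ) : ℝ) : ℝ) : ℂ))
      = ((2 ^ (k + 1) * p : ℕ) : ℂ) := by
    rw [Complex.ofReal_div, Complex.ofReal_one, Complex.ofReal_natCast]
    field_simp
  rw [c1] at hnum
  rw [c2] at hden
  have c3 : ((1 / ((2 ^ (k + 1) * p : ℕ) : ℝ) : ℝ) : ℂ) = 1 / ((2 ^ (k + 1) * p : ℕ) : ℂ) := by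
    rw [Complex.ofReal_div, Complex.ofReal_one, Complex.ofReal_natCast]
  rw [c3] at hnum hden
  simp only [Nat.cast_one, one_mul] at hden
  rw [hnum, hden, zpow_neg, zpow_natCast]
  generalize thetaChar g 2 ε 0 0 _ = A at *
  generalize thetaChar g 2 ε 0 0 _ = B at *
  push_cast
  rw [mul_pow]
  have h2 : ((2 : ℂ) ^ (k + 1)) ^ g ≠ 0 := pow_ne_zero _ (pow_ne_zero _ two_ne_zero)
  field_simp
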